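/- Let H be a 2-reducible r-tree, where r ≥ 4, with cross-cut number σ = σ(H). Then there is a constant C > 0 (depending only on r and the number of vertices of H) such that ex(n,H) ≤ (σ−1)·binom(n,r−1) + C·n^{r−2} for all n. -/

import Mathlib

/-!
Let `w` be the number of vertices of `H` and write `∂` for the shadow. A nonempty `r`-graph all of
whose shadow members have more than `w` extensions contains `H`, by a greedy embedding. Deleting the
edges over members of the shadow with at most `w` extensions therefore gives `#F ≤ w * #∂F` for
every `F` without a copy of the tree `H`. Deleting instead the edges over members with at most
`σ - 1` extensions costs at most `(σ - 1) * #∂F` edges and leaves a family `G` with `#G ≤ w * #∂G`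
in which every `D ∈ ∂G` has at least `σ` extensions. So it suffices to show
`#∂G = O(n ^ (r - 2))`, and for this the linear bound is applied to two smaller trees.

* Removing two private vertices from every edge of `H` leaves an `(r - 2)`-tree. It has no copy
  among the kernels of `G` of size `r - 2`, because private vertices could be restored greedily.
  Hence there are `O(n ^ (r - 3))` such kernels, and they lie below `O(n ^ (r - 2))` sets `D`.
* Removing a minimum cross-cut leaves an `(r - 1)`-tree. It has no copy in a family `K ⊆ ∂G` whose
  members are all extended by the same `σ` vertices, because these could serve as the cross-cut.
  Hence `#K ≤ w * #∂K`.

The link of an `(r - 2)`-set `c` that is not a kernel has a cover with at most `w` vertices. Only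
`O(n ^ (r - 2))` sets `D` have the form `c ∪ {x}` with `x` in the cover of `c`; for any other `D`,
all extensions of `D` lie in the cover of each `c = D \ {x}`. Split these `D` according to some
`σ` of their extensions. Every `c` lies in the shadow of at most `2 ^ w` of the parts, and the
second bullet, summed over the parts, bounds their number by `w * 2 ^ w * n ^ (r - 2)`.
-/

open Finset
open scoped Classical

noncomputable section

variable {α β : Type*}

/-- The vertex set of a hypergraph given by its finite edge set. -/
def hverts [DecidableEq α] (H : Finset (Finset α)) : Finset α := H.sup id

/-- `E 0, E 1, …, E (m-1)` is a tree-defining ordering: every edge after the first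
has a parent among the earlier edges containing its intersection with the union of
all earlier edges. -/
def IsTreeOrder {m : ℕ} [DecidableEq α] (E : Fin m → Finset α) : Prop :=
  ∀ i : Fin m, 0 < i.1 → ∃ j : Fin m, j < i ∧ E i ∩ (Finset.Iio i).sup E ⊆ E j

/-- A tight tree-defining ordering for an `r`-uniform hypergraph. -/
def IsTightTreeOrder {m : ℕ} [DecidableEq α] (r : ℕ) (E : Fin m → Finset α) : Prop :=
  ∀ i : Fin m, 0 < i.1 → ∃ j : Fin m, j < i ∧ E i ∩ (Finset.Iio i).sup E ⊆ E j ∧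
    (E i ∩ E j).card = r - 1

/-- `H` is an `r`-tree: its edges admit a tree-defining ordering (with multiplicities
allowed in the ordering), and all edges have `r` vertices. -/
def IsRTree [DecidableEq α] (r : ℕ) (H : Finset (Finset α)) : Prop :=
  ∃ (m : ℕ) (E : Fin m → Finset α),
    H = Finset.image E Finset.univ ∧ IsTreeOrder E ∧ ∀ i, (E i).card = r

/-- `H` is a tight `r`-tree. -/
def IsTightRTree [DecidableEq α] (r : ℕ) (H : Finset (Finset α)) : Prop :=
  ∃ (m : ℕ) (E : Fin m → Finset α),
    H = Finset.image E Finset.univ ∧ IsTightTreeOrder r E ∧ ∀ i, (E i).card = r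

/-- The degree of a vertex: the number of edges containing it. -/
def hdeg [DecidableEq α] (H : Finset (Finset α)) (x : α) : ℕ :=
  (H.filter (fun E => x ∈ E)).card

/-- `H` is `k`-reducible: every edge contains at least `k` vertices of degree 1. -/
def Reducible [DecidableEq α] (k : ℕ) (H : Finset (Finset α)) : Prop :=
  ∀ E ∈ H, k ≤ (E.filter (fun x => hdeg H x = 1)).card

/-- `S` is a cross-cut of `H`: it meets every edge in exactly one vertex. -/
def IsCrossCut [DecidableEq α] (H : Finset (Finset α)) (S : Finset α) : Prop :=
  ∀ E ∈ H, (E ∩ S).card = 1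

/-- The cross-cut number: minimum size of a cross-cut. -/
def crossCutNum [DecidableEq α] (H : Finset (Finset α)) : ℕ :=
  sInf {k | ∃ S : Finset α, IsCrossCut H S ∧ S.card = k}

/-- `S` is a vertex cover of `H`. -/
def IsVertexCover [DecidableEq α] (H : Finset (Finset α)) (S : Finset α) : Prop :=
  ∀ E ∈ H, (E ∩ S).Nonempty

/-- The vertex cover number: minimum size of a vertex cover. -/
def coverNum [DecidableEq α] (H : Finset (Finset α)) : ℕ :=
  sInf {k | ∃ S : Finset α, IsVertexCover H S ∧ S.card = k}

/-- `G` contains a copy of `H`, i.e. `H` is embeddable in `G`. -/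
def ContainsCopy [DecidableEq α] [DecidableEq β] (G : Finset (Finset β))
    (H : Finset (Finset α)) : Prop :=
  ∃ f : α → β, Set.InjOn f ↑(H.sup id) ∧ ∀ E ∈ H, E.image f ∈ G

/-- The Turán number `ex(n, H)`: the maximum size of an `r`-uniform family on `[n]`
containing no copy of `H`. -/
def exNum [DecidableEq α] (n r : ℕ) (H : Finset (Finset α)) : ℕ :=
  sSup {N | ∃ F : Finset (Finset (Fin n)), (∀ E ∈ F, E.card = r) ∧
    ¬ ContainsCopy F H ∧ F.card = N}

section Copies

variable [DecidableEq α] [DecidableEq β]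

theorem mem_hverts {H : Finset (Finset α)} {x : α} : x ∈ hverts H ↔ ∃ E ∈ H, x ∈ E := by
  simp [hverts, mem_sup]

theorem subset_hverts {H : Finset (Finset α)} {E : Finset α} (hE : E ∈ H) : E ⊆ hverts H :=
  fun _ hx => mem_hverts.2 ⟨E, hE, hx⟩

theorem hverts_insert (H : Finset (Finset α)) (E : Finset α) :
    hverts (insert E H) = hverts H ∪ E := by
  rw [hverts, sup_insert, sup_comm]
  rfl

theorem ContainsCopy.mono {F G : Finset (Finset β)} {H : Finset (Finset α)}
    (hG : ContainsCopy G H) (hGF : G ⊆ F) : ContainsCopy F H :=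
  let ⟨f, hf, hfG⟩ := hG
  ⟨f, hf, fun E hE => hGF (hfG E hE)⟩

theorem containsCopy_empty [Nonempty β] (F : Finset (Finset β)) :
    ContainsCopy F (∅ : Finset (Finset α)) :=
  ⟨fun _ => Classical.arbitrary β, by simp, by simp⟩

theorem exists_eqOn_injOn_union_image_eq {A B : Finset α} {e : Finset β} {f : α → β}
    (hf : Set.InjOn f A) (hsub : (A ∩ B).image f ⊆ e)
    (hdisj : Disjoint (e \ (A ∩ B).image f) (A.image f)) (hcard : #e = #B) :
    ∃ g : α → β, Set.EqOn g f A ∧ Set.InjOn g ↑(A ∪ B) ∧ B.image g = e := by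
  have hcard' : #(B \ A) = #(e \ (A ∩ B).image f) := by
    rw [card_sdiff_of_subset hsub, card_sdiff, hcard,
      card_image_of_injOn (hf.mono (coe_subset.2 inter_subset_left))]
  let φ := equivOfCardEq hcard'
  let g : α → β := fun x => if h : x ∈ B \ A then φ ⟨x, h⟩ else f x
  have hgA : Set.EqOn g f A := fun x hx => dif_neg (by simp [mem_coe.1 hx])
  have hgφ (x : (B \ A : Finset α)) : g x = φ x := dif_pos x.2
  have hgBA : (B \ A).image g = e \ (A ∩ B).image f := by
    ext y
    refine ⟨fun hy => ?_, fun hy => ?_⟩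
    · obtain ⟨x, hx, rfl⟩ := mem_image.1 hy
      exact hgφ ⟨x, hx⟩ ▸ (φ ⟨x, hx⟩).2
    · exact mem_image.2 ⟨φ.symm ⟨y, hy⟩, (φ.symm ⟨y, hy⟩).2, by rw [hgφ, φ.apply_symm_apply]⟩
  refine ⟨g, hgA, ?_, ?_⟩
  · rw [← union_sdiff_self_eq_union, coe_union, Set.injOn_union (disjoint_coe.2 disjoint_sdiff)]
    refine ⟨hf.congr hgA.symm, ?_, fun x hx y hy hxy => ?_⟩
    · rw [← card_image_iff, hgBA, hcard']
    · refine disjoint_left.1 hdisj (hgBA ▸ mem_image_of_mem g hy) ?_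
      rw [← hxy, hgA hx]
      exact mem_image_of_mem f hx
  · have hAB : (A ∩ B).image g = (A ∩ B).image f :=
      image_congr fun x hx => hgA (mem_inter.1 hx).1
    calc B.image g = (B \ A ∪ A ∩ B).image g := by rw [inter_comm, sdiff_union_inter]
      _ = e := by rw [image_union, hgBA, hAB, Finset.sdiff_union_of_subset hsub]

end Copies

section Trees

variable [DecidableEq α] [DecidableEq β] {r : ℕ} {H : Finset (Finset α)}

theorem IsTreeOrder.comp_castSucc {m : ℕ} {E : Fin (m + 1) → Finset α} (hE : IsTreeOrder E) :
    IsTreeOrder (E ∘ Fin.castSucc) := by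
  intro i hi
  obtain ⟨j, hj, hsub⟩ := hE i.castSucc hi
  obtain ⟨j, rfl⟩ := Fin.exists_castSucc_eq.2 (hj.trans_le i.castSucc.le_last).ne
  refine ⟨j, hj, ?_⟩
  rwa [← Fin.map_castSuccEmb_Iio, sup_map] at hsub

theorem image_univ_eq_insert_last {m : ℕ} (E : Fin (m + 1) → Finset α) :
    image E univ = insert (E (Fin.last m)) (image (E ∘ Fin.castSucc) univ) := by
  rw [Fin.univ_castSuccEmb, cons_eq_insert, image_insert, map_eq_image, image_image]
  rfl

theorem IsRTree.induction_on {P : Finset (Finset α) → Prop} (hH : IsRTree r H) (empty : P ∅)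
    (insert : ∀ (H : Finset (Finset α)) (E : Finset α), #E = r →
      (H.Nonempty → ∃ E' ∈ H, E ∩ hverts H ⊆ E') → P H → P (insert E H)) : P H := by
  obtain ⟨m, E, rfl, hE, hEr⟩ := hH
  induction m with
  | zero => simpa using empty
  | succ m ih =>
    rw [image_univ_eq_insert_last]
    refine insert _ _ (hEr _) (fun hne => ?_) (ih _ hE.comp_castSucc fun i => hEr _)
    obtain ⟨_, hi⟩ := hne
    obtain ⟨i, -, -⟩ := mem_image.1 hi
    obtain ⟨j, hj, hsub⟩ := hE (Fin.last m) i.pos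
    obtain ⟨j, rfl⟩ := Fin.exists_castSucc_eq.2 hj.ne
    refine ⟨_, mem_image_of_mem _ (mem_univ j), ?_⟩
    rwa [Fin.Iio_last_eq_map, sup_map, ← Function.id_comp (E ∘ _), ← sup_image] at hsub

theorem IsRTree.sized (hH : IsRTree r H) : (H : Set (Finset α)).Sized r := by
  obtain ⟨m, E, rfl, -, hEr⟩ := hH
  intro A hA
  obtain ⟨i, -, rfl⟩ := mem_image.1 (mem_coe.1 hA)
  exact hEr i

theorem IsRTree.image_sdiff {k : ℕ} (hH : IsRTree r H) {B : Finset α → Finset α}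
    (hB : ∀ E ∈ H, B E ⊆ E ∧ #(B E) = k) (hBE : ∀ E ∈ H, ∀ E' ∈ H, B E ∩ E' ⊆ B E') :
    IsRTree (r - k) (H.image fun E => E \ B E) := by
  obtain ⟨m, E, rfl, hE, hEr⟩ := hH
  have hmem (i : Fin m) : E i ∈ image E univ := mem_image_of_mem E (mem_univ i)
  refine ⟨m, fun i => E i \ B (E i), image_image, fun i hi => ?_, fun i => ?_⟩
  · obtain ⟨j, hj, hsub⟩ := hE i hi
    refine ⟨j, hj, fun x hx => ?_⟩
    obtain ⟨hxi, hxU⟩ := mem_inter.1 hx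
    obtain ⟨hxE, hxB⟩ := mem_sdiff.1 hxi
    have hsup : ((Iio i).sup fun l => E l \ B (E l)) ⊆ (Iio i).sup E :=
      sup_mono_fun fun _ _ => sdiff_subset
    have hxj : x ∈ E j := hsub (mem_inter.2 ⟨hxE, hsup hxU⟩)
    exact mem_sdiff.2 ⟨hxj, fun h => hxB (hBE _ (hmem j) _ (hmem i) (mem_inter.2 ⟨h, hxE⟩))⟩
  · rw [card_sdiff_of_subset (hB _ (hmem i)).1, (hB _ (hmem i)).2, hEr i]

theorem hverts_image_sdiff_subset (H : Finset (Finset α)) (B : Finset α → Finset α) :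
    hverts (H.image fun E => E \ B E) ⊆ hverts H := by
  intro x hx
  obtain ⟨_, hE, hxE⟩ := mem_hverts.1 hx
  obtain ⟨E, hEH, rfl⟩ := mem_image.1 hE
  exact subset_hverts hEH (mem_sdiff.1 hxE).1

end Trees

section Shadow

variable [DecidableEq β]

/-- The neighbourhood of a set `D` of vertices: the vertices that complete `D` to an edge of `F`.
For an `r`-graph `F` and an `(r - 1)`-set `D`, its size is the codegree of `D`. -/
def extensions (F : Finset (Finset β)) (D : Finset β) : Finset β :=
  (hverts F).filter fun v => v ∉ D ∧ insert v D ∈ F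

theorem mem_extensions {F : Finset (Finset β)} {D : Finset β} {v : β} :
    v ∈ extensions F D ↔ v ∉ D ∧ insert v D ∈ F := by
  rw [extensions, mem_filter, and_iff_right_iff_imp]
  exact fun h => subset_hverts h.2 (mem_insert_self v D)

/-- While some `D ∈ F.shadow` has at most `q` extensions, deleting the corresponding edges does not
decrease `#F - q * #F.shadow`. -/
theorem exists_subfamily_forall_lt_card_extensions (q : ℕ) (F : Finset (Finset β)) :
    ∃ G ⊆ F, #F + q * #G.shadow ≤ #G + q * #F.shadow ∧
      ∀ D ∈ G.shadow, q < #(extensions G D) := by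
  induction F using Finset.strongInduction with
  | H F ih =>
    by_cases hF : ∀ D ∈ F.shadow, q < #(extensions F D)
    · exact ⟨F, subset_rfl, le_rfl, hF⟩
    push Not at hF
    obtain ⟨D, hD, hDq⟩ := hF
    let F₁ := F \ (extensions F D).image (insert · D)
    have hF₁ : F₁ ⊆ F := sdiff_subset
    have hDF₁ : D ∉ F₁.shadow := fun h => by
      obtain ⟨v, hv, hvF₁⟩ := mem_shadow_iff_insert_mem.1 h
      obtain ⟨hvF, hvD⟩ := mem_sdiff.1 hvF₁
      exact hvD (mem_image_of_mem (insert · D) (mem_extensions.2 ⟨hv, hvF⟩))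
    have hshadow : #F₁.shadow + 1 ≤ #F.shadow :=
      card_lt_card ((ssubset_iff_of_subset (shadow_monotone hF₁)).2 ⟨D, hD, hDF₁⟩)
    have hcard : #F ≤ #F₁ + q := by
      have : #F - #((extensions F D).image (insert · D)) ≤ #F₁ := le_card_sdiff _ _
      have := (card_image_le (f := (insert · D))).trans hDq
      omega
    obtain ⟨G, hG, hle, hext⟩ := ih F₁ (hF₁.ssubset_of_ne fun h => hDF₁ (h ▸ hD))
    refine ⟨G, hG.trans hF₁, ?_, hext⟩
    have := Nat.mul_le_mul_left q hshadow
    rw [Nat.mul_succ] at this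
    omega

theorem card_shadow_mul_card_le [Fintype β] {k : ℕ} {F : Finset (Finset β)}
    (hF : (F : Set (Finset β)).Sized k) :
    #F.shadow * Fintype.card β ≤ Fintype.card β ^ k := by
  cases k with
  | zero =>
    have : F.shadow = ∅ := eq_empty_of_forall_notMem fun D hD => by
      obtain ⟨v, -, hv⟩ := mem_shadow_iff_insert_mem.1 hD
      simpa using hF hv
    simp [this]
  | succ k =>
    rw [pow_succ]
    exact Nat.mul_le_mul_right _ (hF.shadow.card_le.trans (Nat.choose_le_pow _ _))

end Shadow

section Kernels

variable [DecidableEq α] [DecidableEq β] {r w : ℕ} {H : Finset (Finset α)}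
  {F K : Finset (Finset β)} {c : Finset β}

/-- A set `c` of vertices is a kernel of `F` if no `w` vertices cover the link of `c` in `F`. Up to
the value of `w`, for an `r`-graph `F` and `#c < r` this says that `c` is the centre of a large
sunflower in `F`. -/
def IsKernel (w : ℕ) (F : Finset (Finset β)) (c : Finset β) : Prop :=
  ∀ W : Finset β, #W ≤ w → ∃ e ∈ F, c ⊆ e ∧ Disjoint (e \ c) W

/-- The unwanted vertices are swapped for fresh ones, one at a time. -/
theorem isKernel_of_forall_lt_card_extensions (hext : ∀ D ∈ F.shadow, w < #(extensions F D))
    {e : Finset β} (he : e ∈ F) (hc : c ⊆ e) : IsKernel w F c := by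
  intro W hW
  induction hn : #((e \ c) ∩ W) generalizing e with
  | zero => exact ⟨e, he, hc, disjoint_iff_inter_eq_empty.2 (card_eq_zero.1 hn)⟩
  | succ n ih =>
    obtain ⟨x, hx⟩ := card_pos.1 (by omega : 0 < #((e \ c) ∩ W))
    obtain ⟨hxe, hxc⟩ := mem_sdiff.1 (mem_inter.1 hx).1
    obtain ⟨v, hv, hvW⟩ := exists_mem_notMem_of_card_lt_card
      (hW.trans_lt (hext _ (erase_mem_shadow he hxe)))
    refine ih (mem_extensions.1 hv).2
      ((subset_erase.2 ⟨hc, hxc⟩).trans (subset_insert v _)) ?_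
    have hswap : (insert v (e.erase x) \ c) ∩ W = ((e \ c) ∩ W).erase x := by
      ext y
      simp only [mem_inter, mem_sdiff, mem_insert, mem_erase]
      grind
    rw [hswap, card_erase_of_mem hx, hn, Nat.add_sub_cancel]

theorem IsKernel.exists_eqOn_injOn_union_image_insert_mem {V E : Finset α} {f : α → β}
    (hker : IsKernel w F ((V ∩ E).image f)) (hF : (F : Set (Finset β)).Sized r) (hE : #E = r)
    (hV : #V ≤ w) (hHV : hverts H ⊆ V) (hf : Set.InjOn f V) (hfF : ∀ A ∈ H, A.image f ∈ F) :
    ∃ g : α → β, Set.EqOn g f V ∧ Set.InjOn g ↑(V ∪ E) ∧ ∀ A ∈ insert E H, A.image g ∈ F := by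
  obtain ⟨e, he, hsub, hdisj⟩ := hker (V.image f) (card_image_le.trans hV)
  obtain ⟨g, hgf, hg, rfl⟩ := exists_eqOn_injOn_union_image_eq hf hsub hdisj ((hF he).trans hE.symm)
  refine ⟨g, hgf, hg, forall_mem_insert _ _ _ |>.2 ⟨he, fun A hA => ?_⟩⟩
  rw [image_congr (hgf.mono (coe_subset.2 ((subset_hverts hA).trans hHV)))]
  exact hfF A hA

/-- The tree is embedded edge by edge: a new edge meets the part already embedded inside its
parent, so the image of this intersection is a kernel. -/
theorem IsRTree.containsCopy_of_lt_card_extensions [Nonempty β] (hH : IsRTree r H)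
    (hF : (F : Set (Finset β)).Sized r) (hne : F.Nonempty)
    (hext : ∀ D ∈ F.shadow, #(hverts H) < #(extensions F D)) : ContainsCopy F H := by
  suffices ∀ w, (∀ D ∈ F.shadow, w < #(extensions F D)) → #(hverts H) ≤ w → ContainsCopy F H from
    this _ hext le_rfl
  intro w hext
  refine hH.induction_on (P := fun H => #(hverts H) ≤ w → ContainsCopy F H)
    (fun _ => containsCopy_empty F) fun H E hE htree ih hw => ?_
  have hHw : #(hverts H) ≤ w := by
    rw [hverts_insert] at hw
    exact (card_le_card subset_union_left).trans hw
  obtain ⟨f, (hf : Set.InjOn f (hverts H)), hfF⟩ := ih hHw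
  obtain ⟨e, he, hsub⟩ : ∃ e ∈ F, (hverts H ∩ E).image f ⊆ e := by
    rcases H.eq_empty_or_nonempty with rfl | hHne
    · exact hne.imp fun e he => ⟨he, by simp [hverts]⟩
    · obtain ⟨E', hE', hsub⟩ := htree hHne
      exact ⟨_, hfF E' hE', image_subset_image (inter_comm E _ ▸ hsub)⟩
  have hker := isKernel_of_forall_lt_card_extensions hext he hsub
  obtain ⟨g, -, hg, hgF⟩ :=
    hker.exists_eqOn_injOn_union_image_insert_mem hF hE hHw subset_rfl hf hfF
  rw [← hverts_insert] at hg
  exact ⟨g, hg, hgF⟩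

theorem IsRTree.card_le_mul_card_shadow [Nonempty β] (hH : IsRTree r H)
    (hF : (F : Set (Finset β)).Sized r) (hfree : ¬ ContainsCopy F H) :
    #F ≤ #(hverts H) * #F.shadow := by
  by_contra! hlt
  obtain ⟨G, hGF, hle, hext⟩ := exists_subfamily_forall_lt_card_extensions #(hverts H) F
  have hG : G.Nonempty := card_pos.1 (by omega)
  have hGsized : (G : Set (Finset β)).Sized r := hF.mono (coe_subset.2 hGF)
  exact hfree ((hH.containsCopy_of_lt_card_extensions hGsized hG hext).mono hGF)

theorem Reducible.exists_private_subsets {k : ℕ} (hH : Reducible k H) :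
    ∃ B : Finset α → Finset α, (∀ E ∈ H, B E ⊆ E ∧ #(B E) = k) ∧
      ∀ E ∈ H, ∀ E' ∈ H, ∀ x ∈ B E, x ∈ E' → E' = E := by
  choose! B hBsub hBcard using fun E hE => exists_subset_card_eq (hH E hE)
  refine ⟨B, fun E hE => ⟨(hBsub E hE).trans (filter_subset _ _), hBcard E hE⟩,
    fun E hE E' hE' x hx hxE' => ?_⟩
  obtain ⟨hxE, hdeg⟩ := mem_filter.1 (hBsub E hE hx)
  exact card_le_one.1 hdeg.le _ (mem_filter.2 ⟨hE', hxE'⟩) _ (mem_filter.2 ⟨hE, hxE⟩)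

theorem hverts_image_sdiff_union_hverts_inter_eq_sdiff {B : Finset α → Finset α}
    (hB : ∀ E ∈ H, ∀ E' ∈ H, ∀ x ∈ B E, x ∈ E' → E' = E) {H' : Finset (Finset α)} (hH' : H' ⊆ H)
    {E : Finset α} (hE : E ∈ H) (hEH' : E ∉ H') :
    (hverts (H.image fun E => E \ B E) ∪ hverts H') ∩ E = E \ B E := by
  refine Subset.antisymm (fun x hx => ?_) (subset_inter ?_ sdiff_subset)
  · obtain ⟨hxV, hxE⟩ := mem_inter.1 hx
    refine mem_sdiff.2 ⟨hxE, fun hxB => ?_⟩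
    rcases mem_union.1 hxV with hxV | hxH'
    · obtain ⟨_, hA, hxA⟩ := mem_hverts.1 hxV
      obtain ⟨E', hE', rfl⟩ := mem_image.1 hA
      obtain ⟨hxE', hxB'⟩ := mem_sdiff.1 hxA
      exact hxB' (hB E hE E' hE' x hxB hxE' ▸ hxB)
    · obtain ⟨E', hE', hxE'⟩ := mem_hverts.1 hxH'
      exact hEH' (hB E hE E' (hH' hE') x hxB hxE' ▸ hE')
  · exact (subset_hverts (mem_image_of_mem (fun E => E \ B E) hE)).trans subset_union_left

theorem ContainsCopy.of_image_sdiff {B : Finset α → Finset α}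
    (hcopy : ContainsCopy K (H.image fun E => E \ B E))
    (hB : ∀ E ∈ H, ∀ E' ∈ H, ∀ x ∈ B E, x ∈ E' → E' = E)
    (hK : ∀ c ∈ K, IsKernel w F c) (hF : (F : Set (Finset β)).Sized r)
    (hH : (H : Set (Finset α)).Sized r) (hw : #(hverts H) ≤ w) : ContainsCopy F H := by
  obtain ⟨f, (hf : Set.InjOn f (hverts (H.image fun E => E \ B E))), hfK⟩ := hcopy
  set V := hverts (H.image fun E => E \ B E)
  suffices ∀ H' ⊆ H, ∃ g : α → β, Set.EqOn g f V ∧ Set.InjOn g ↑(V ∪ hverts H') ∧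
      ∀ E ∈ H', E.image g ∈ F by
    obtain ⟨g, -, hg, hgF⟩ := this H subset_rfl
    exact ⟨g, hg.mono (coe_subset.2 subset_union_right), hgF⟩
  intro H' hH'
  induction H' using Finset.induction_on with
  | empty => exact ⟨f, Set.eqOn_refl f _, by simpa [hverts] using hf, by simp⟩
  | insert E H' hEH' ih =>
    obtain ⟨hE, hH'⟩ := insert_subset_iff.1 hH'
    obtain ⟨g, hgf, hg, hgF⟩ := ih hH'
    have hmem : E \ B E ∈ H.image fun E => E \ B E := mem_image_of_mem (fun E => E \ B E) hE
    have hker : IsKernel w F (((V ∪ hverts H') ∩ E).image g) := by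
      rw [hverts_image_sdiff_union_hverts_inter_eq_sdiff hB hH' hE hEH',
        image_congr (hgf.mono (coe_subset.2 (subset_hverts hmem)))]
      exact hK _ (hfK _ hmem)
    have hcard : #(V ∪ hverts H') ≤ w :=
      (card_le_card (union_subset (hverts_image_sdiff_subset H B) (sup_mono hH'))).trans hw
    obtain ⟨g', hg'g, hg', hg'F⟩ := hker.exists_eqOn_injOn_union_image_insert_mem hF (hH hE) hcard
      subset_union_right hg hgF
    refine ⟨g', (hg'g.mono (coe_subset.2 subset_union_left)).trans hgf, ?_, hg'F⟩
    rwa [hverts_insert, ← union_assoc]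

end Kernels

section Reduction

variable [DecidableEq α] [DecidableEq β] {r w : ℕ} {H : Finset (Finset α)}
  {F K : Finset (Finset β)}

theorem IsRTree.card_le_mul_card_shadow_of_isKernel [Nonempty β] {k : ℕ} (hH : IsRTree r H)
    (hred : Reducible k H) (hF : (F : Set (Finset β)).Sized r) (hfree : ¬ ContainsCopy F H)
    (hK : (K : Set (Finset β)).Sized (r - k)) (hker : ∀ c ∈ K, IsKernel #(hverts H) F c) :
    #K ≤ #(hverts H) * #K.shadow := by
  obtain ⟨B, hB, hBE⟩ := hred.exists_private_subsets
  have htree : IsRTree (r - k) (H.image fun E => E \ B E) :=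
    hH.image_sdiff hB fun E hE E' hE' x hx => by
      obtain ⟨hxB, hxE'⟩ := mem_inter.1 hx
      exact hBE E hE E' hE' x hxB hxE' ▸ hxB
  calc #K ≤ #(hverts (H.image fun E => E \ B E)) * #K.shadow :=
        htree.card_le_mul_card_shadow hK fun hcopy =>
          hfree (hcopy.of_image_sdiff hBE hker hF hH.sized le_rfl)
    _ ≤ #(hverts H) * #K.shadow :=
        Nat.mul_le_mul_right _ (card_le_card (hverts_image_sdiff_subset H B))

theorem Reducible.mono {k l : ℕ} (hH : Reducible l H) (hkl : k ≤ l) : Reducible k H :=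
  fun E hE => hkl.trans (hH E hE)

theorem Reducible.exists_isCrossCut (hH : Reducible 1 H) : ∃ S, IsCrossCut H S := by
  obtain ⟨B, hB, hBE⟩ := hH.exists_private_subsets
  refine ⟨H.biUnion B, fun E hE => ?_⟩
  have hinter : E ∩ H.biUnion B = B E := by
    ext x
    simp only [mem_inter, mem_biUnion]
    refine ⟨fun ⟨hxE, E', hE', hx⟩ => hBE E' hE' E hE x hx hxE ▸ hx,
      fun hx => ⟨(hB E hE).1 hx, E, hE, hx⟩⟩
  rw [hinter, (hB E hE).2]

theorem IsCrossCut.exists_card_eq_crossCutNum {S : Finset α} (hS : IsCrossCut H S) :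
    ∃ T, IsCrossCut H T ∧ #T = crossCutNum H :=
  Nat.sInf_mem (s := {k | ∃ T, IsCrossCut H T ∧ #T = k}) ⟨#S, S, hS, rfl⟩

theorem IsCrossCut.containsCopy {S : Finset α} {T : Finset β} (hS : IsCrossCut H S)
    (hcopy : ContainsCopy K (H.image (· \ S))) (hK : ∀ D ∈ K, T ⊆ extensions F D)
    (hcard : #T = #S) : ContainsCopy F H := by
  obtain ⟨f, (hf : Set.InjOn f (hverts (H.image (· \ S)))), hfK⟩ := hcopy
  set V := hverts (H.image (· \ S))
  have hV {x : α} : x ∈ V ↔ ∃ E ∈ H, x ∈ E \ S := by simp [V, mem_hverts]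
  have hdisj : Disjoint T (V.image f) := by
    refine disjoint_right.2 fun y hy hyT => ?_
    obtain ⟨x, hx, rfl⟩ := mem_image.1 hy
    obtain ⟨E, hE, hxE⟩ := hV.1 hx
    exact (mem_extensions.1 (hK _ (hfK _ (mem_image_of_mem _ hE)) hyT)).1 (mem_image_of_mem f hxE)
  have hVS : V ∩ S = ∅ := disjoint_iff_inter_eq_empty.1 <| disjoint_left.2 fun x hx =>
    let ⟨_, _, hxE⟩ := hV.1 hx
    (mem_sdiff.1 hxE).2
  obtain ⟨g, hgf, hg, hgS⟩ : ∃ g : α → β, Set.EqOn g f V ∧ Set.InjOn g ↑(V ∪ S) ∧ S.image g = T :=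
    exists_eqOn_injOn_union_image_eq hf (by simp [hVS]) (by simpa [hVS] using hdisj) hcard
  refine ⟨g, hg.mono (coe_subset.2 fun x hx => ?_), fun E hE => ?_⟩
  · obtain ⟨E, hE, hxE⟩ := mem_hverts.1 hx
    by_cases hxS : x ∈ S
    · exact mem_union_right _ hxS
    · exact mem_union_left _ (hV.2 ⟨E, hE, mem_sdiff.2 ⟨hxE, hxS⟩⟩)
  · obtain ⟨s, hs⟩ := card_eq_one.1 (hS E hE)
    have hsT : g s ∈ T := by
      have hsE : s ∈ E ∩ S := hs ▸ mem_singleton_self s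
      exact hgS ▸ mem_image_of_mem g (mem_inter.1 hsE).2
    have hD : (E \ S).image g = (E \ S).image f :=
      image_congr fun x hx => hgf (hV.2 ⟨E, hE, hx⟩)
    have hE_eq : E.image g = insert (g s) ((E \ S).image f) := by
      rw [← hD, ← image_insert, insert_eq, ← hs, union_comm, sdiff_union_inter]
    exact hE_eq ▸ (mem_extensions.1 (hK _ (hfK _ (mem_image_of_mem _ hE)) hsT)).2

theorem IsRTree.card_le_mul_card_shadow_of_subset_extensions [Nonempty β] (hH : IsRTree r H)
    (hfree : ¬ ContainsCopy F H) {S : Finset α} {T : Finset β} (hS : IsCrossCut H S)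
    (hcard : #T = #S) (hK : (K : Set (Finset β)).Sized (r - 1))
    (hT : ∀ D ∈ K, T ⊆ extensions F D) : #K ≤ #(hverts H) * #K.shadow := by
  have htree : IsRTree (r - 1) (H.image fun E => E \ (E ∩ S)) :=
    hH.image_sdiff (fun E hE => ⟨inter_subset_left, hS E hE⟩) fun E _ E' _ x hx => by
      simp_all
  calc #K ≤ #(hverts (H.image fun E => E \ (E ∩ S))) * #K.shadow := by
        refine htree.card_le_mul_card_shadow hK fun hcopy => hfree (hS.containsCopy ?_ hT hcard)
        simpa only [sdiff_inter_self_left] using hcopy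
    _ ≤ #(hverts H) * #K.shadow :=
        Nat.mul_le_mul_right _ (card_le_card (hverts_image_sdiff_subset H _))

end Reduction

section Counting

variable [DecidableEq β]

theorem card_filter_exists_mem_erase_le (X : Finset (Finset β)) (C : Finset β → Finset β) :
    #{D ∈ X | ∃ x ∈ D, x ∈ C (D.erase x)} ≤ ∑ c ∈ X.shadow, #(C c) := by
  rw [← card_sigma]
  refine (card_le_card fun D hD => ?_).trans
    (card_image_le (f := fun p : (_ : Finset β) × β => insert p.2 p.1))
  obtain ⟨hDX, x, hx, hxC⟩ := mem_filter.1 hD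
  exact mem_image.2 ⟨⟨D.erase x, x⟩, mem_sigma.2 ⟨erase_mem_shadow hDX hx, hxC⟩, insert_erase hx⟩

/-- Split `Y` into the fibres of `S`: a set `c ∈ Y.shadow` lies in the shadow of the fibre over `A`
only if `A ⊆ C c`, hence in the shadows of at most `2 ^ w` fibres. -/
theorem card_le_of_card_fiber_le_mul_card_shadow {m w : ℕ} {Y : Finset (Finset β)}
    {S C : Finset β → Finset β} (hS : ∀ D ∈ Y, ∀ x ∈ D, S D ⊆ C (D.erase x))
    (hC : ∀ c ∈ Y.shadow, #(C c) ≤ w)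
    (hfiber : ∀ A ∈ Y.image S, #{D ∈ Y | S D = A} ≤ m * #({D ∈ Y | S D = A} : Finset _).shadow) :
    #Y ≤ m * 2 ^ w * #Y.shadow := by
  let fiber (A : Finset β) : Finset (Finset β) := {D ∈ Y | S D = A}
  have hcount : ∑ A ∈ Y.image S, #(fiber A).shadow ≤ 2 ^ w * #Y.shadow := by
    calc ∑ A ∈ Y.image S, #(fiber A).shadow
        = ∑ A ∈ Y.image S, #{c ∈ Y.shadow | c ∈ (fiber A).shadow} := by
          refine sum_congr rfl fun A _ => ?_
          rw [filter_mem_eq_inter, inter_eq_right.2 (shadow_monotone (filter_subset _ _))]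
      _ = ∑ c ∈ Y.shadow, #{A ∈ Y.image S | c ∈ (fiber A).shadow} :=
          sum_card_bipartiteAbove_eq_sum_card_bipartiteBelow fun A c => c ∈ (fiber A).shadow
      _ ≤ ∑ c ∈ Y.shadow, 2 ^ w := by
          refine sum_le_sum fun c hc => ?_
          refine (card_le_card fun A hA => mem_powerset.2 ?_).trans
            ((card_powerset (C c)).trans_le (Nat.pow_le_pow_right two_pos (hC c hc)))
          obtain ⟨D, hD, x, hx, rfl⟩ := mem_shadow_iff.1 (mem_filter.1 hA).2
          obtain ⟨hDY, rfl⟩ := mem_filter.1 hD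
          exact hS D hDY x hx
      _ = 2 ^ w * #Y.shadow := by rw [sum_const, smul_eq_mul, mul_comm]
  calc #Y = ∑ A ∈ Y.image S, #(fiber A) := card_eq_sum_card_image S Y
    _ ≤ ∑ A ∈ Y.image S, m * #(fiber A).shadow := sum_le_sum hfiber
    _ = m * ∑ A ∈ Y.image S, #(fiber A).shadow := (mul_sum _ _ _).symm
    _ ≤ m * (2 ^ w * #Y.shadow) := Nat.mul_le_mul_left m hcount
    _ = m * 2 ^ w * #Y.shadow := (mul_assoc _ _ _).symm

end Counting

section LinkCover

variable [Fintype β] [DecidableEq β] {w : ℕ} {F : Finset (Finset β)} {c : Finset β}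

/-- A vertex cover of the link of `c` in `F`: one with at most `w` vertices unless `c` is a kernel,
in which case there is none and the whole vertex set is used. -/
def linkCover (w : ℕ) (F : Finset (Finset β)) (c : Finset β) : Finset β :=
  if h : ∃ W : Finset β, #W ≤ w ∧ ∀ e ∈ F, c ⊆ e → ¬ Disjoint (e \ c) W then h.choose else univ

theorem card_linkCover_le (hc : ¬ IsKernel w F c) : #(linkCover w F c) ≤ w := by
  have h : ∃ W : Finset β, #W ≤ w ∧ ∀ e ∈ F, c ⊆ e → ¬ Disjoint (e \ c) W := by
    simpa [IsKernel] using hc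
  rw [linkCover, dif_pos h]
  exact h.choose_spec.1

theorem IsKernel.linkCover_eq_univ (hc : IsKernel w F c) : linkCover w F c = univ :=
  dif_neg fun ⟨W, hW, hcover⟩ =>
    let ⟨e, he, hce, hdisj⟩ := hc W hW
    hcover e he hce hdisj

theorem not_disjoint_sdiff_linkCover {e : Finset β} (he : e ∈ F) (hc : c ⊂ e) :
    ¬ Disjoint (e \ c) (linkCover w F c) := by
  unfold linkCover
  split_ifs with h
  · exact h.choose_spec.2 e he hc.subset
  · rw [← top_eq_univ, disjoint_top, bot_eq_empty, sdiff_eq_empty_iff_subset]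
    exact hc.not_subset

theorem extensions_subset_linkCover {D : Finset β} {x : β} (hx : x ∈ D)
    (hxC : x ∉ linkCover w F (D.erase x)) : extensions F D ⊆ linkCover w F (D.erase x) := by
  intro v hv
  obtain ⟨hvD, hvF⟩ := mem_extensions.1 hv
  obtain ⟨y, hy, hyC⟩ := not_disjoint_iff.1 <| not_disjoint_sdiff_linkCover (w := w) hvF
    ((erase_ssubset hx).trans_subset (subset_insert v D))
  have hyxv : y = x ∨ y = v := by
    simp only [mem_sdiff, mem_insert, mem_erase] at hy
    grind
  rcases hyxv with rfl | rfl
  · exact absurd hyC hxC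
  · exact hyC

end LinkCover

section Turan

variable [Fintype β] [Nonempty β] [DecidableEq α] [DecidableEq β] {r : ℕ} {H : Finset (Finset α)}
  {F : Finset (Finset β)}

theorem IsRTree.sum_card_linkCover_le {k : ℕ} (hH : IsRTree r H) (hred : Reducible k H)
    (hF : (F : Set (Finset β)).Sized r) (hfree : ¬ ContainsCopy F H) {P : Finset (Finset β)}
    (hP : (P : Set (Finset β)).Sized (r - k)) :
    ∑ c ∈ P, #(linkCover #(hverts H) F c) ≤ 2 * #(hverts H) * Fintype.card β ^ (r - k) := by
  set w := #(hverts H)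
  set n := Fintype.card β
  let K : Finset (Finset β) := {c ∈ P | IsKernel w F c}
  have hK : (K : Set (Finset β)).Sized (r - k) := hP.mono (coe_subset.2 (filter_subset _ _))
  have hkernel : ∑ c ∈ K, #(linkCover w F c) ≤ w * n ^ (r - k) := by
    calc ∑ c ∈ K, #(linkCover w F c) ≤ #K * n :=
          sum_le_card_nsmul _ _ _ fun c _ => card_le_univ _
      _ ≤ w * #K.shadow * n := Nat.mul_le_mul_right n <|
          hH.card_le_mul_card_shadow_of_isKernel hred hF hfree hK fun c hc => (mem_filter.1 hc).2
      _ = w * (#K.shadow * n) := mul_assoc _ _ _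
      _ ≤ w * n ^ (r - k) := Nat.mul_le_mul_left w (card_shadow_mul_card_le hK)
  have hcover : ∑ c ∈ P with ¬ IsKernel w F c, #(linkCover w F c) ≤ w * n ^ (r - k) := by
    calc ∑ c ∈ P with ¬ IsKernel w F c, #(linkCover w F c) ≤ #{c ∈ P | ¬ IsKernel w F c} * w :=
          sum_le_card_nsmul _ _ _ fun c hc => card_linkCover_le (mem_filter.1 hc).2
      _ ≤ n ^ (r - k) * w := Nat.mul_le_mul_right w <|
          (card_filter_le _ _).trans (hP.card_le.trans (Nat.choose_le_pow _ _))
      _ = w * n ^ (r - k) := mul_comm _ _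
  rw [← sum_filter_add_sum_filter_not P (IsKernel w F)]
  linarith

theorem IsRTree.card_le_of_notMem_linkCover {w : ℕ} (hH : IsRTree r H)
    (hfree : ¬ ContainsCopy F H) {S : Finset α} (hS : IsCrossCut H S) {Y : Finset (Finset β)}
    (hY : (Y : Set (Finset β)).Sized (r - 1)) (hext : ∀ D ∈ Y, #S ≤ #(extensions F D))
    (hYC : ∀ D ∈ Y, ∀ x ∈ D, x ∉ linkCover w F (D.erase x)) :
    #Y ≤ #(hverts H) * 2 ^ w * #Y.shadow := by
  choose! T hT hTcard using fun D hD => exists_subset_card_eq (hext D hD)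
  refine card_le_of_card_fiber_le_mul_card_shadow (S := T) (C := linkCover w F)
    (fun D hD x hx => (hT D hD).trans (extensions_subset_linkCover hx (hYC D hD x hx))) ?_ ?_
  · intro c hc
    obtain ⟨D, hD, x, hx, rfl⟩ := mem_shadow_iff.1 hc
    exact card_linkCover_le fun hker => hYC D hD x hx (hker.linkCover_eq_univ ▸ mem_univ x)
  · intro A hA
    obtain ⟨D, hD, rfl⟩ := mem_image.1 hA
    refine hH.card_le_mul_card_shadow_of_subset_extensions hfree hS (hTcard D hD)
      (hY.mono (coe_subset.2 (filter_subset _ _))) fun D' hD' => ?_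
    obtain ⟨hD'Y, hTD'⟩ := mem_filter.1 hD'
    exact hTD' ▸ hT D' hD'Y

theorem IsRTree.card_shadow_le_of_crossCutNum_le_card_extensions (hH : IsRTree r H)
    (hred : Reducible 2 H) (hF : (F : Set (Finset β)).Sized r) (hfree : ¬ ContainsCopy F H)
    (hext : ∀ D ∈ F.shadow, crossCutNum H ≤ #(extensions F D)) :
    #F.shadow ≤ #(hverts H) * (2 ^ #(hverts H) + 2) * Fintype.card β ^ (r - 2) := by
  set w := #(hverts H)
  let X : Finset (Finset β) := {D ∈ F.shadow | ∃ x ∈ D, x ∈ linkCover w F (D.erase x)}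
  let Y : Finset (Finset β) := {D ∈ F.shadow | ¬ ∃ x ∈ D, x ∈ linkCover w F (D.erase x)}
  have hsplit : #X + #Y = #F.shadow := card_filter_add_card_filter_not _
  have hX : #X ≤ 2 * w * Fintype.card β ^ (r - 2) :=
    (card_filter_exists_mem_erase_le _ _).trans
      (hH.sum_card_linkCover_le hred hF hfree hF.shadow.shadow)
  have hY : #Y ≤ w * 2 ^ w * Fintype.card β ^ (r - 2) := by
    obtain ⟨S₀, hS₀⟩ := (hred.mono one_le_two).exists_isCrossCut
    obtain ⟨S, hS, hcard⟩ := hS₀.exists_card_eq_crossCutNum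
    have hYF : Y ⊆ F.shadow := filter_subset _ _
    have hYsized : (Y : Set (Finset β)).Sized (r - 1) := hF.shadow.mono (coe_subset.2 hYF)
    calc #Y ≤ w * 2 ^ w * #Y.shadow :=
          hH.card_le_of_notMem_linkCover hfree hS hYsized
            (fun D hD => hcard ▸ hext D (hYF hD))
            fun D hD x hx hxC => (mem_filter.1 hD).2 ⟨x, hx, hxC⟩
      _ ≤ w * 2 ^ w * Fintype.card β ^ (r - 2) := Nat.mul_le_mul_left _
          (hYsized.shadow.card_le.trans (Nat.choose_le_pow _ _))
  linarith

theorem IsRTree.card_le_of_reducible_two (hH : IsRTree r H) (hred : Reducible 2 H)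
    (hF : (F : Set (Finset β)).Sized r) (hfree : ¬ ContainsCopy F H) :
    #F ≤ (crossCutNum H - 1) * (Fintype.card β).choose (r - 1) +
      #(hverts H) ^ 2 * (2 ^ #(hverts H) + 2) * Fintype.card β ^ (r - 2) := by
  set w := #(hverts H)
  set q := crossCutNum H - 1
  obtain ⟨G, hGF, hle, hext⟩ := exists_subfamily_forall_lt_card_extensions q F
  have hG : (G : Set (Finset β)).Sized r := hF.mono (coe_subset.2 hGF)
  have hGfree : ¬ ContainsCopy G H := fun hcopy => hfree (hcopy.mono hGF)
  calc #F ≤ q * #F.shadow + #G := by linarith [Nat.zero_le (q * #G.shadow)]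
    _ ≤ q * (Fintype.card β).choose (r - 1) + w * #G.shadow :=
        add_le_add (Nat.mul_le_mul_left q hF.shadow.card_le)
          (hH.card_le_mul_card_shadow hG hGfree)
    _ ≤ q * (Fintype.card β).choose (r - 1) +
          w * (w * (2 ^ w + 2) * Fintype.card β ^ (r - 2)) := by
        gcongr
        exact hH.card_shadow_le_of_crossCutNum_le_card_extensions hred hG hGfree fun D hD =>
          Nat.le_of_pred_lt (hext D hD)
    _ = q * (Fintype.card β).choose (r - 1) + w ^ 2 * (2 ^ w + 2) * Fintype.card β ^ (r - 2) := by
        ring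

end Turan

theorem exNum_upper_trees_sharper_general [DecidableEq α] {r : ℕ} (hr : 2 ≤ r)
    {H : Finset (Finset α)} (htree : IsRTree r H) (hred : Reducible 2 H) (n : ℕ) :
    exNum n r H ≤ (crossCutNum H - 1) * n.choose (r - 1) +
      #(hverts H) ^ 2 * (2 ^ #(hverts H) + 2) * n ^ (r - 2) := by
  refine csSup_le' ?_
  rintro _ ⟨F, hF, hfree, rfl⟩
  rcases F.eq_empty_or_nonempty with rfl | ⟨e, he⟩
  · simp
  · obtain ⟨v, -⟩ : e.Nonempty := card_pos.1 (by rw [hF e he]; omega)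
    have : Nonempty (Fin n) := ⟨v⟩
    simpa using htree.card_le_of_reducible_two hred hF hfree

/-- Sharper estimate for `2`-reducible `r`-trees, `r ≥ 4`:
`ex(n,H) ≤ (σ-1)·C(n,r-1) + C·n^(r-2)` for a constant `C` depending only on `H` and `r`. -/
theorem exNum_upper_trees_sharper {α : Type*} [DecidableEq α]
    (r σ : ℕ) (hr : 4 ≤ r)
    (H : Finset (Finset α)) (htree : IsRTree r H) (hred : Reducible 2 H)
    (hσ : crossCutNum H = σ) :
    ∃ C : ℕ, 0 < C ∧ ∀ n : ℕ,
      exNum n r H ≤ (σ - 1) * Nat.choose n (r - 1) + C * n ^ (r - 2) := by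
  refine ⟨#(hverts H) ^ 2 * (2 ^ #(hverts H) + 2) + 1, Nat.succ_pos _, fun n => ?_⟩
  subst hσ
  refine (exNum_upper_trees_sharper_general (by omega) htree hred n).trans ?_
  gcongr
  exact Nat.le_succ _

end
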